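/- arXiv:2303.07949 — 2 statements merged into one kernel-verified Lean document; each statement's English description precedes it below -/
import Mathlib

section
/- Let A be an n×n real symmetric matrix with k ≥ 2 distinct eigenvalues λ_1 < ⋯ < λ_k and ordered multiplicity list m = (m_1,…,m_k) with all m_i > 0. If M is an r-bordering of A with at most t distinct eigenvalues (2 ≤ t ≤ k), then C(m,t) ≤ r, where C(m,t) is the minimum over choices of indices 1 = p_1 ≤ p_2 ≤ ⋯ ≤ p_t = k of the maximum over i of Σ_{j=p_i+1}^{p_{i+1}−1} m_j. -/
/-!
Let `θ₀ ≤ ⋯ ≤ θ_{t-1}` list the eigenvalues of `M`, the largest one being repeated if there are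
fewer than `t`. No eigenvalue of `M` lies strictly between `θᵢ` and `θᵢ₊₁`, hence
`(M - θᵢ)(M - θᵢ₊₁)` is positive semidefinite. If the eigenvalues of `A` inside `(θᵢ, θᵢ₊₁)` had
total multiplicity greater than `r`, then, as the off-diagonal block `B` of `M` has only `r` rows,
some nonzero sum `x` of eigenvectors for those eigenvalues would satisfy `B x = 0`. For
`y = (0, x)` this gives `M y = (0, A x)`, so `⟨(M - θᵢ) y, (M - θᵢ₊₁) y⟩` would be a sum of terms
`(μⱼ - θᵢ)(μⱼ - θᵢ₊₁) ‖xⱼ‖²`, which is negative: a contradiction (`sum_eigMult_le`).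

Choosing `pᵢ` as the least index `j` with `μⱼ ≥ θᵢ` (and the last index if there is none), the
eigenvalues `μⱼ` with `pᵢ < j < pᵢ₊₁` lie in `(θᵢ, θᵢ₊₁)`. The end conditions on `p` hold because
every eigenvalue of `A` lies between the extreme eigenvalues of `M` (`le_of_bordering`,
`ge_of_bordering`).
-/

open Matrix

/-- The multiplicity of `t` as an eigenvalue of the matrix `A`. -/
noncomputable def eigMult {n : ℕ} (A : Matrix (Fin n) (Fin n) ℝ) (t : ℝ) : ℕ :=
  Module.finrank ℝ (LinearMap.ker (Matrix.toLin' (A - t • (1 : Matrix (Fin n) (Fin n) ℝ))))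

/-- `Cval k t m`: the min-max gap multiplicity of the list `m` with `t` gap boundaries. -/
noncomputable def Cval (k t : ℕ) (m : Fin k → ℕ) : ℕ :=
  sInf { r : ℕ | ∃ p : Fin t → Fin k, Monotone p ∧
    (∀ i : Fin t, (i.val = 0 → (p i).val = 0) ∧ (i.val = t - 1 → (p i).val = k - 1)) ∧
    r = Finset.univ.sup (fun i : Fin t =>
      if h : i.val + 1 < t then
        ∑ j ∈ Finset.Ioo (p i) (p ⟨i.val + 1, h⟩), m j
      else 0) }

lemma dotProduct_cfc_nonneg {N : ℕ} {M : Matrix (Fin N) (Fin N) ℝ} {f : ℝ → ℝ}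
    (hf : ∀ x ∈ spectrum ℝ M, 0 ≤ f x) (y : Fin N → ℝ) : 0 ≤ y ⬝ᵥ (cfc f M) *ᵥ y := by
  open scoped MatrixOrder in
  have h : 0 ≤ cfc f M := cfc_nonneg hf
  rw [Matrix.nonneg_iff_posSemidef] at h
  simpa using h.dotProduct_mulVec_nonneg y

lemma isSelfAdjoint_of_isSymm {N : ℕ} {M : Matrix (Fin N) (Fin N) ℝ} (hM : M.IsSymm) :
    IsSelfAdjoint M := by
  rw [IsSelfAdjoint, Matrix.star_eq_conjTranspose, Matrix.conjTranspose_eq_transpose_of_trivial]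
  exact hM

/-- The quadratic form of `(M - a)(M - b)` is nonnegative if no eigenvalue of `M` lies strictly
between `a` and `b`. -/
lemma gap_form_nonneg {N : ℕ} {M : Matrix (Fin N) (Fin N) ℝ} (hM : M.IsSymm) {a b : ℝ}
    (hf : ∀ x ∈ spectrum ℝ M, 0 ≤ (x - a) * (x - b)) (y : Fin N → ℝ) :
    0 ≤ (M *ᵥ y - a • y) ⬝ᵥ (M *ᵥ y - b • y) := by
  have hs := isSelfAdjoint_of_isSymm hM
  have h := dotProduct_cfc_nonneg hf y
  have e : cfc (fun x : ℝ => (x - a) * (x - b)) M = (M - a • 1) * (M - b • 1) := by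
    rw [cfc_mul (fun x : ℝ => x - a) (fun x : ℝ => x - b) M,
      cfc_sub (fun x : ℝ => x) (fun _ => a) M, cfc_sub (fun x : ℝ => x) (fun _ => b) M,
      cfc_id' ℝ M, cfc_const a M, cfc_const b M, Algebra.algebraMap_eq_smul_one,
      Algebra.algebraMap_eq_smul_one]
  rw [e, ← Matrix.mulVec_mulVec, Matrix.dotProduct_mulVec, ← Matrix.mulVec_transpose,
    Matrix.transpose_sub, hM.eq, Matrix.transpose_smul, Matrix.transpose_one] at h
  simpa [Matrix.sub_mulVec, Matrix.smul_mulVec] using h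

lemma form_ge {N : ℕ} {M : Matrix (Fin N) (Fin N) ℝ} (hM : M.IsSymm) {a : ℝ}
    (hf : ∀ x ∈ spectrum ℝ M, a ≤ x) (y : Fin N → ℝ) : a * (y ⬝ᵥ y) ≤ y ⬝ᵥ M *ᵥ y := by
  have hs := isSelfAdjoint_of_isSymm hM
  have h := dotProduct_cfc_nonneg (f := fun x => x - a) (fun x hx => sub_nonneg.2 (hf x hx)) y
  rw [cfc_sub (fun x : ℝ => x) (fun _ => a) M, cfc_id' ℝ M, cfc_const a M,
    Algebra.algebraMap_eq_smul_one] at h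
  simpa [Matrix.sub_mulVec, Matrix.smul_mulVec] using h

lemma form_le {N : ℕ} {M : Matrix (Fin N) (Fin N) ℝ} (hM : M.IsSymm) {b : ℝ}
    (hf : ∀ x ∈ spectrum ℝ M, x ≤ b) (y : Fin N → ℝ) : y ⬝ᵥ M *ᵥ y ≤ b * (y ⬝ᵥ y) := by
  have hs := isSelfAdjoint_of_isSymm hM
  have h := dotProduct_cfc_nonneg (f := fun x => b - x) (fun x hx => sub_nonneg.2 (hf x hx)) y
  rw [cfc_sub (fun _ => b) (fun x : ℝ => x) M, cfc_id' ℝ M, cfc_const b M,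
    Algebra.algebraMap_eq_smul_one] at h
  simpa [Matrix.sub_mulVec, Matrix.smul_mulVec] using h

lemma append_dotProduct {r n : ℕ} (u : Fin r → ℝ) (x w : Fin n → ℝ) :
    Fin.append (0 : Fin r → ℝ) x ⬝ᵥ Fin.append u w = x ⬝ᵥ w := by
  simp [dotProduct, Fin.sum_univ_add]

/-- `M (0, x) = (B x, A x)`, where `B` is the upper right block of `M`. -/
lemma mulVec_append {r n : ℕ} {A : Matrix (Fin n) (Fin n) ℝ}
    {M : Matrix (Fin (r + n)) (Fin (r + n)) ℝ}
    (hsub : ∀ i j : Fin n, M (Fin.natAdd r i) (Fin.natAdd r j) = A i j) (x : Fin n → ℝ) :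
    M *ᵥ Fin.append (0 : Fin r → ℝ) x
      = Fin.append (M.submatrix (Fin.castAdd n) (Fin.natAdd r) *ᵥ x) (A *ᵥ x) := by
  funext i
  refine Fin.addCases (fun i => ?_) (fun i => ?_) i <;>
    simp [Matrix.mulVec, dotProduct, Fin.sum_univ_add, hsub]

lemma exists_eigenvector {n : ℕ} {A : Matrix (Fin n) (Fin n) ℝ} {c : ℝ}
    (hc : c ∈ spectrum ℝ A) : ∃ x : Fin n → ℝ, x ≠ 0 ∧ A *ᵥ x = c • x := by
  rw [← Matrix.spectrum_toLin', ← Module.End.hasEigenvalue_iff_mem_spectrum] at hc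
  obtain ⟨x, hx⟩ := hc.exists_hasEigenvector
  exact ⟨x, hx.2, by simpa using hx.apply_eq_smul⟩

lemma dotProduct_self_pos' {n : ℕ} {x : Fin n → ℝ} (hx : x ≠ 0) : 0 < x ⬝ᵥ x :=
  lt_of_le_of_ne (Finset.sum_nonneg fun i _ => mul_self_nonneg (x i))
    fun h => hx (dotProduct_self_eq_zero.1 h.symm)

lemma ge_of_bordering {r n : ℕ} {A : Matrix (Fin n) (Fin n) ℝ}
    {M : Matrix (Fin (r + n)) (Fin (r + n)) ℝ} (hM : M.IsSymm)
    (hsub : ∀ i j : Fin n, M (Fin.natAdd r i) (Fin.natAdd r j) = A i j) {a c : ℝ}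
    (hf : ∀ x ∈ spectrum ℝ M, a ≤ x) (hc : c ∈ spectrum ℝ A) : a ≤ c := by
  obtain ⟨x, hx, hAx⟩ := exists_eigenvector hc
  have h := form_ge hM hf (Fin.append 0 x)
  rw [mulVec_append hsub, append_dotProduct, append_dotProduct, hAx, dotProduct_smul,
    smul_eq_mul] at h
  exact le_of_mul_le_mul_right h (dotProduct_self_pos' hx)

lemma le_of_bordering {r n : ℕ} {A : Matrix (Fin n) (Fin n) ℝ}
    {M : Matrix (Fin (r + n)) (Fin (r + n)) ℝ} (hM : M.IsSymm)
    (hsub : ∀ i j : Fin n, M (Fin.natAdd r i) (Fin.natAdd r j) = A i j) {b c : ℝ}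
    (hf : ∀ x ∈ spectrum ℝ M, x ≤ b) (hc : c ∈ spectrum ℝ A) : c ≤ b := by
  obtain ⟨x, hx, hAx⟩ := exists_eigenvector hc
  have h := form_le hM hf (Fin.append 0 x)
  rw [mulVec_append hsub, append_dotProduct, append_dotProduct, hAx, dotProduct_smul,
    smul_eq_mul] at h
  exact le_of_mul_le_mul_right h (dotProduct_self_pos' hx)

lemma eigenvector_dotProduct_eq_zero {n : ℕ} {A : Matrix (Fin n) (Fin n) ℝ} (hA : A.IsSymm)
    {c d : ℝ} (hcd : c ≠ d) {x y : Fin n → ℝ} (hx : A *ᵥ x = c • x) (hy : A *ᵥ y = d • y) :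
    x ⬝ᵥ y = 0 := by
  have h : x ⬝ᵥ A *ᵥ y = A *ᵥ x ⬝ᵥ y := by
    rw [Matrix.dotProduct_mulVec, ← Matrix.mulVec_transpose, hA.eq]
  rw [hx, hy, dotProduct_smul, smul_dotProduct, smul_eq_mul, smul_eq_mul] at h
  have h2 : (c - d) * (x ⬝ᵥ y) = 0 := by linarith
  exact (mul_eq_zero.1 h2).resolve_left (sub_ne_zero.2 hcd)

/-- The eigenvalues of `A` in an open interval free of eigenvalues of its `r`-bordering `M` have
total multiplicity at most `r`. -/
lemma sum_eigMult_le {n k r : ℕ} {A : Matrix (Fin n) (Fin n) ℝ} (hA : A.IsSymm)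
    {μ : Fin k → ℝ} (hμ : Function.Injective μ)
    {M : Matrix (Fin (r + n)) (Fin (r + n)) ℝ} (hM : M.IsSymm)
    (hsub : ∀ i j : Fin n, M (Fin.natAdd r i) (Fin.natAdd r j) = A i j) {a b : ℝ}
    (hf : ∀ x ∈ spectrum ℝ M, 0 ≤ (x - a) * (x - b)) (S : Finset (Fin k))
    (hS : ∀ j ∈ S, a < μ j ∧ μ j < b) : ∑ j ∈ S, eigMult A (μ j) ≤ r := by
  by_contra! hlt
  let E : S → Submodule ℝ (Fin n → ℝ) := fun j =>
    LinearMap.ker (Matrix.toLin' (A - μ j • (1 : Matrix (Fin n) (Fin n) ℝ)))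
  let B : Matrix (Fin r) (Fin n) ℝ := M.submatrix (Fin.castAdd n) (Fin.natAdd r)
  let Φ : (∀ j, E j) →ₗ[ℝ] (Fin r → ℝ) :=
    Matrix.toLin' B ∘ₗ ∑ j, (E j).subtype ∘ₗ LinearMap.proj j
  have hdim : Module.finrank ℝ (Fin r → ℝ) < Module.finrank ℝ (∀ j, E j) := by
    rw [Module.finrank_fin_fun, Module.finrank_pi_fintype]
    rw [← Finset.sum_coe_sort] at hlt
    exact hlt
  obtain ⟨v, hv, hv0⟩ :=
    (Submodule.ne_bot_iff _).1 (LinearMap.ker_ne_bot_of_finrank_lt (f := Φ) hdim)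
  have hAv : ∀ j, A *ᵥ (v j : Fin n → ℝ) = μ j • (v j : Fin n → ℝ) := fun j => by
    have := (v j).2
    simp only [E, LinearMap.mem_ker, Matrix.toLin'_apply, Matrix.sub_mulVec, Matrix.smul_mulVec,
      Matrix.one_mulVec] at this
    exact sub_eq_zero.1 this
  have hBx : B *ᵥ (∑ j : S, (v j : Fin n → ℝ)) = 0 := by
    simpa [Φ, LinearMap.mem_ker, Matrix.toLin'_apply, Matrix.mulVec_sum] using hv
  have h := gap_form_nonneg hM hf (Fin.append 0 (∑ j : S, (v j : Fin n → ℝ)))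
  have hsh : ∀ c : ℝ, M *ᵥ Fin.append 0 (∑ j : S, (v j : Fin n → ℝ))
      - c • Fin.append 0 (∑ j : S, (v j : Fin n → ℝ))
      = Fin.append (0 : Fin r → ℝ) (∑ j : S, (μ j - c) • (v j : Fin n → ℝ)) := fun c => by
    rw [mulVec_append hsub]
    change Fin.append (B *ᵥ _) _ - _ = _
    rw [hBx, Matrix.mulVec_sum]
    simp_rw [hAv, sub_smul, Finset.sum_sub_distrib, ← Finset.smul_sum]
    funext i
    refine Fin.addCases (fun i => ?_) (fun i => ?_) i <;> simp
  rw [hsh, hsh, append_dotProduct, sum_dotProduct] at h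
  have hterm : ∀ j : S, (μ j - a) • (v j : Fin n → ℝ) ⬝ᵥ ∑ i : S, (μ i - b) • (v i : Fin n → ℝ)
      = (μ j - a) * (μ j - b) * ((v j : Fin n → ℝ) ⬝ᵥ (v j : Fin n → ℝ)) := fun j => by
    rw [dotProduct_sum, Finset.sum_eq_single j]
    · simp only [smul_dotProduct, dotProduct_smul, smul_eq_mul]; ring
    · intro i _ hij
      have hne : μ j ≠ μ i := fun h => hij (Subtype.ext (hμ h.symm))
      simp [smul_dotProduct, dotProduct_smul,
        eigenvector_dotProduct_eq_zero hA hne (hAv j) (hAv i)]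
    · simp
  simp_rw [hterm] at h
  refine absurd h (not_le.2 ?_)
  have hneg : ∀ j : S, (μ j - a) * (μ j - b) < 0 := fun j =>
    mul_neg_of_pos_of_neg (sub_pos.2 (hS j j.2).1) (sub_neg.2 (hS j j.2).2)
  obtain ⟨j₀, hj₀⟩ := Function.ne_iff.1 hv0
  refine Finset.sum_neg' (fun (j : S) _ => ?_) ⟨j₀, Finset.mem_univ _, ?_⟩
  · exact mul_nonpos_of_nonpos_of_nonneg (hneg j).le
      (Finset.sum_nonneg fun i _ => mul_self_nonneg _)
  · refine mul_neg_of_neg_of_pos (hneg j₀) (dotProduct_self_pos' fun h0 => hj₀ ?_)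
    exact Subtype.ext h0

/-- A nonempty finite set of at most `t` reals is the range of a monotone list of length `t`
that jumps over no element of the set. -/
lemma exists_monotone_list {t : ℕ} (ht : 0 < t) (s : Finset ℝ) (hs : s.Nonempty)
    (hst : s.card ≤ t) : ∃ θ : Fin t → ℝ, Monotone θ ∧ (∀ x ∈ s, θ ⟨0, ht⟩ ≤ x) ∧
      (∀ x ∈ s, x ≤ θ ⟨t - 1, by omega⟩) ∧
      ∀ (i : Fin t) (h : i.val + 1 < t), ∀ x ∈ s, x ≤ θ i ∨ θ ⟨i.val + 1, h⟩ ≤ x := by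
  have hc : 0 < s.card := hs.card_pos
  let e := s.orderIsoOfFin rfl
  have he : ∀ x ∈ s, ∃ j, (e j : ℝ) = x := fun x hx => ⟨e.symm ⟨x, hx⟩, by simp⟩
  have hmono : ∀ {i j}, i ≤ j → (e i : ℝ) ≤ e j := fun h => e.monotone h
  refine ⟨fun i => e ⟨min i.val (s.card - 1), by omega⟩, ?_, ?_, ?_, ?_⟩
  · intro i j hij
    refine hmono ?_
    simp only [Fin.le_def] at hij ⊢
    omega
  · intro x hx
    obtain ⟨j, rfl⟩ := he x hx
    refine hmono ?_
    simp [Fin.le_def]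
  · intro x hx
    obtain ⟨j, rfl⟩ := he x hx
    refine hmono ?_
    simp only [Fin.le_def]
    omega
  · intro i h x hx
    obtain ⟨j, rfl⟩ := he x hx
    by_cases hji : j.val ≤ i.val
    · left
      refine hmono ?_
      simp only [Fin.le_def]
      omega
    · right
      refine hmono ?_
      simp only [Fin.le_def]
      omega

/-- If a symmetric matrix `A` has `k ≥ 2` distinct eigenvalues `μ 0 < ⋯ < μ (k-1)` with
ordered multiplicity list `m`, and `M` is a symmetric `r`-bordering of `A` with at most `t`
distinct eigenvalues (`2 ≤ t ≤ k`), then `C(m, t) ≤ r`. -/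
theorem stmt5 {n k r t : ℕ} (hk : 2 ≤ k) (ht : 2 ≤ t) (htk : t ≤ k)
    (A : Matrix (Fin n) (Fin n) ℝ) (hA : A.IsSymm)
    (μ : Fin k → ℝ) (hμ : StrictMono μ) (hspec : spectrum ℝ A = Set.range μ)
    (M : Matrix (Fin (r + n)) (Fin (r + n)) ℝ) (hM : M.IsSymm)
    (hsub : ∀ i j : Fin n, M (Fin.natAdd r i) (Fin.natAdd r j) = A i j)
    (hq : (spectrum ℝ M).ncard ≤ t) :
    Cval k t (fun i => eigMult A (μ i)) ≤ r := by
  classical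
  have hμA : ∀ j, μ j ∈ spectrum ℝ A := fun j => hspec ▸ Set.mem_range_self j
  have hfin : (spectrum ℝ M).Finite := Matrix.finite_spectrum M
  have hmem : ∀ x, x ∈ hfin.toFinset ↔ x ∈ spectrum ℝ M := fun x => hfin.mem_toFinset
  have hne : hfin.toFinset.Nonempty := by
    by_contra hemp
    rw [Finset.not_nonempty_iff_eq_empty] at hemp
    -- With no eigenvalue of `M`, the eigenvalue `μ 0` of `A` would be at least `μ 0 + 1`.
    have := ge_of_bordering hM hsub (a := μ ⟨0, by omega⟩ + 1)
      (fun x hx => by rw [← hmem, hemp] at hx; simp at hx) (hμA ⟨0, by omega⟩)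
    linarith
  obtain ⟨θ, hθ, hθ0, hθ1, hgap⟩ := exists_monotone_list (t := t) (by omega) hfin.toFinset hne
    (by rwa [← Set.ncard_eq_toFinset_card _ hfin])
  simp only [hmem] at hθ0 hθ1 hgap
  let last : Fin k := ⟨k - 1, by omega⟩
  -- The index set is enlarged by `last` so that it is never empty.
  let F : Fin t → Finset (Fin k) := fun i => Finset.univ.filter fun j => θ i ≤ μ j ∨ j = last
  have hF : ∀ i, (F i).Nonempty := fun i => ⟨last, by simp [F]⟩
  let p : Fin t → Fin k := fun i => (F i).min' (hF i)
  have hp : ∀ i, θ i ≤ μ (p i) ∨ p i = last := fun i => by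
    simpa [F] using (F i).min'_mem (hF i)
  have hple : ∀ i j, θ i ≤ μ j → p i ≤ j := fun i j h =>
    (F i).min'_le j (by simp [F, h])
  have hlast : ∀ j : Fin k, j ≤ last := fun j => by
    simp only [Fin.le_def, last]; omega
  unfold Cval
  refine le_trans (Nat.sInf_le ⟨p, ?_, ?_, rfl⟩) (Finset.sup_le fun i _ => ?_)
  · intro i j hij
    rcases hp j with h | h
    · exact hple i _ ((hθ hij).trans h)
    · rw [h]; exact hlast _
  · refine fun i => ⟨fun hi => ?_, fun hi => ?_⟩
    · have h0 : i = ⟨0, by omega⟩ := Fin.ext hi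
      have := hple i ⟨0, by omega⟩ (by
        rw [h0]; exact ge_of_bordering hM hsub hθ0 (hμA _))
      simpa [Fin.le_def] using this
    · have h1 : i = ⟨t - 1, by omega⟩ := Fin.ext hi
      have hpl : p i = last := by
        rcases hp i with h | h
        · refine le_antisymm (hlast _) (hμ.le_iff_le.1 (le_trans ?_ h))
          rw [h1]; exact le_of_bordering hM hsub hθ1 (hμA _)
        · exact h
      rw [hpl]
  · split_ifs with h
    · refine sum_eigMult_le hA hμ.injective hM hsub (a := θ i) (b := θ ⟨i.val + 1, h⟩)
        (fun x hx => ?_) _ (fun j hj => ?_)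
      · have hii : θ i ≤ θ ⟨i.val + 1, h⟩ := hθ (by simp [Fin.le_def])
        rcases hgap i h x hx with h' | h'
        · exact mul_nonneg_of_nonpos_of_nonpos (by linarith) (by linarith)
        · exact mul_nonneg (by linarith) (by linarith)
      · obtain ⟨h1, h2⟩ := Finset.mem_Ioo.1 hj
        constructor
        · rcases hp i with h' | h'
          · exact h'.trans_lt (hμ h1)
          · exact absurd h1 (not_lt.2 (h' ▸ hlast j))
        · by_contra! h'
          exact absurd h2 (not_lt.2 (hple _ _ h'))
    · exact Nat.zero_le r
end

section
/- Let A be an n×n real symmetric matrix with k ≥ 2 distinct eigenvalues and ordered multiplicity list m = (m_1,…,m_k), all m_i > 0, and let 2 ≤ t ≤ k and r ≥ 0 be integers. If C(m,t) ≤ r, then there exists an r-bordering M of A (a symmetric (n+r)×(n+r) matrix containing A as trailing principal submatrix) with at most t distinct eigenvalues. -/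
/-!
Choose `p` attaining `C(m, t)` and let the target spectrum be `T = {μ (p i)}`, a set of at most
`t` points. Every eigenvalue of `A` is either in `T` or lies in a gap between two consecutive
points of `T`, and each gap holds at most `r` eigenvalues counted with multiplicity. Hence the
eigenvalues in the gaps can be distributed over `r` classes, with at most one from each gap in any
class (`exists_label`). The eigenvalues `lam i` in one class are strictly interlaced by points of
`T`: the least point `θ` of `T`, and for each `lam i` the right end `tau i` of its gap. By the
partial fraction expansion in `secular`, `diag (lam i)` can therefore be bordered by a single row
and column to an arrow matrix whose eigenvalues are `θ` and the `tau i`; an empty class gives the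
scalar block `θ`. The direct sum of these `r` arrow matrices and the scalar blocks of the remaining
eigenvalues has spectrum inside `T` (`exists_arrow`), and conjugating by an orthogonal
diagonalization of `A` turns it into an `r`-bordering of `A` (`exists_bordering`).
-/

open Matrix

/-- The rational function `(x - θ) ∏ (x - tau i) / (x - lam i)` is the secular function
`x - d - ∑ b i / (x - lam i)` of an arrow matrix with positive squared border entries `b i`.
Conditions `h1` and `h2` say that the intervals `[lam i, tau i]` are disjoint, so every ratio
`(lam j - tau i) / (lam j - lam i)` is positive; these ratios are the factors by which the
residues change when one more pair is multiplied in. -/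
theorem secular {ι : Type*} [DecidableEq ι] (θ : ℝ) (lam tau : ι → ℝ) (S : Finset ι)
    (h0 : ∀ i ∈ S, θ < lam i) (h1 : ∀ i ∈ S, lam i < tau i)
    (h2 : ∀ i ∈ S, ∀ j ∈ S, i ≠ j → tau i < lam j ∨ lam j < lam i) :
    ∃ (d : ℝ) (b : ι → ℝ), (∀ i ∈ S, 0 < b i) ∧ ∀ x, (∀ i ∈ S, x ≠ lam i) →
      x - d - ∑ i ∈ S, b i / (x - lam i) = (x - θ) * ∏ i ∈ S, ((x - tau i) / (x - lam i)) := by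
  induction S using Finset.induction_on with
  | empty => exact ⟨θ, fun _ => 1, by simp, by simp⟩
  | insert a S ha ih =>
    obtain ⟨d, b, hb, hx⟩ := ih (fun i hi => h0 i (by simp [hi])) (fun i hi => h1 i (by simp [hi]))
      (fun i hi j hj => h2 i (by simp [hi]) j (by simp [hj]))
    have hne : ∀ i ∈ S, i ≠ a := fun i hi h => ha (h ▸ hi)
    have hla : ∀ i ∈ S, lam i ≠ lam a := fun i hi h => by
      rcases h2 i (by simp [hi]) a (by simp) (hne i hi) with h' | h'
      · linarith [h1 i (by simp [hi])]
      · linarith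
    have hpos : ∀ i ∈ insert a S, ∀ j ∈ insert a S, i ≠ j →
        0 < (lam j - tau i) / (lam j - lam i) := fun i hi j hj hij => by
      have := h1 i hi
      rcases h2 i hi j hj hij with h' | h'
      · exact div_pos (by linarith) (by linarith)
      · exact div_pos_of_neg_of_neg (by linarith) (by linarith)
    refine ⟨d + tau a - lam a, fun i => if i = a then
      (tau a - lam a) * ((lam a - θ) * ∏ i ∈ S, ((lam a - tau i) / (lam a - lam i)))
      else b i * ((lam i - tau a) / (lam i - lam a)), ?_, ?_⟩
    · intro i hi
      by_cases hia : i = a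
      · simp only [hia, if_true]
        have := h0 a (by simp)
        have := h1 a (by simp)
        refine mul_pos (by linarith) (mul_pos (by linarith) (Finset.prod_pos fun i hi => ?_))
        exact hpos i (by simp [hi]) a (by simp) (hne i hi)
      · simp only [hia, if_false]
        have hi' : i ∈ S := by simpa [hia] using hi
        exact mul_pos (hb i hi') (hpos a (by simp) i hi (Ne.symm hia))
    · intro x hxl
      have hxa : x - lam a ≠ 0 := sub_ne_zero.2 (hxl a (by simp))
      have hxS : ∀ i ∈ S, x ≠ lam i := fun i hi => hxl i (by simp [hi])
      rw [Finset.sum_insert ha, Finset.prod_insert ha]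
      beta_reduce
      rw [if_pos rfl,
        ← hx (lam a) (fun i hi => (hla i hi).symm), mul_left_comm, ← hx x hxS]
      -- Partial fractions of each product `(x - tau a) / (x - lam a) * (b i / (x - lam i))`.
      have key : ∑ i ∈ S, (if i = a then
          (tau a - lam a) * (lam a - d - ∑ i ∈ S, b i / (lam a - lam i))
          else b i * ((lam i - tau a) / (lam i - lam a))) / (x - lam i)
          = (x - tau a) / (x - lam a) * ∑ i ∈ S, b i / (x - lam i)
            + (tau a - lam a) / (x - lam a) * ∑ i ∈ S, b i / (lam a - lam i) := by
        rw [Finset.mul_sum, Finset.mul_sum, ← Finset.sum_add_distrib]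
        refine Finset.sum_congr rfl fun i hi => ?_
        rw [if_neg (hne i hi)]
        have e1 := sub_ne_zero.2 (hxS i hi)
        have e2 := sub_ne_zero.2 (hla i hi)
        have e3 := sub_ne_zero.2 (hla i hi).symm
        rw [show lam a - lam i = -(lam i - lam a) by ring]
        field_simp
        ring
      rw [key]
      field_simp
      ring

/-- If the eigenvalues `lam` outside `T` are sorted into disjoint classes `S c`, each interlaced
strictly by points of `T`, then a diagonal block `D` and a border `B` can be chosen such that
the matrix `[[diag D, Bᵀ], [B, diag lam]]` has no eigenvector for any `x ∉ T`. The matrix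
splits into one arrow matrix for each class and scalar blocks with entries in `T`; the
eigenvector equation is written out in coordinates. -/
theorem exists_arrow {ι κ : Type*} [Fintype ι] [Fintype κ] [DecidableEq ι] [DecidableEq κ]
    (θ : ℝ) (lam tau : ι → ℝ) (S : κ → Finset ι) (T : Set ℝ) (hθ : θ ∈ T)
    (hdisj : ∀ i c c', i ∈ S c → i ∈ S c' → c = c')
    (hcov : ∀ i, (∃ c, i ∈ S c) ∨ lam i ∈ T)
    (htau : ∀ c, ∀ i ∈ S c, tau i ∈ T)
    (h0 : ∀ c, ∀ i ∈ S c, θ < lam i) (h1 : ∀ c, ∀ i ∈ S c, lam i < tau i)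
    (h2 : ∀ c, ∀ i ∈ S c, ∀ j ∈ S c, i ≠ j → tau i < lam j ∨ lam j < lam i) :
    ∃ (D : κ → ℝ) (B : Matrix ι κ ℝ), ∀ x ∉ T, ∀ (u : κ → ℝ) (w : ι → ℝ),
      (∀ c, D c * u c + ∑ j, B j c * w j = x * u c) →
      (∀ j, ∑ c, B j c * u c + lam j * w j = x * w j) → u = 0 ∧ w = 0 := by
  choose D b hb hsec using fun c => secular θ lam tau (S c) (h0 c) (h1 c) (h2 c)
  refine ⟨D, fun j c => if j ∈ S c then √(b c j) else 0, fun x hx u w hu hw => ?_⟩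
  simp only [ite_mul, zero_mul, Finset.sum_ite_mem, Finset.univ_inter] at hu
  have hrow : ∀ c, ∀ j ∈ S c, √(b c j) * u c = (x - lam j) * w j := fun c j hj => by
    have := hw j
    beta_reduce at this
    rw [Finset.sum_eq_single c (fun c' _ hc' => by
      rw [if_neg (fun h => hc' (hdisj j c' c h hj)), zero_mul]) (by simp), if_pos hj] at this
    linarith
  have hs : ∀ c, ∀ j ∈ S c, √(b c j) ≠ 0 := fun c j hj => (Real.sqrt_pos.2 (hb c j hj)).ne'
  have hu0 : ∀ c, u c = 0 := fun c => by
    -- At a pole `x = lam j`, row `j` forces `u c = 0`; elsewhere the secular equation does.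
    by_cases hl : ∃ j ∈ S c, x = lam j
    · obtain ⟨j, hj, rfl⟩ := hl
      have := hrow c j hj
      rw [sub_self, zero_mul] at this
      exact (mul_eq_zero.1 this).resolve_left (hs c j hj)
    · push Not at hl
      have hsum : ∑ j ∈ S c, √(b c j) * w j = (∑ j ∈ S c, b c j / (x - lam j)) * u c := by
        rw [Finset.sum_mul]
        refine Finset.sum_congr rfl fun j hj => ?_
        have e := sub_ne_zero.2 (hl j hj)
        have hwj : w j = √(b c j) * u c / (x - lam j) := by
          rw [hrow c j hj]; field_simp
        rw [hwj, ← mul_div_assoc, ← mul_assoc, Real.mul_self_sqrt (hb c j hj).le]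
        ring
      have hz : (x - D c - ∑ j ∈ S c, b c j / (x - lam j)) * u c = 0 := by
        have := hu c
        rw [hsum] at this
        linarith
      refine (mul_eq_zero.1 hz).resolve_left ?_
      rw [hsec c x hl]
      refine mul_ne_zero (sub_ne_zero.2 fun h => hx (h ▸ hθ)) (Finset.prod_ne_zero_iff.2 ?_)
      exact fun j hj => div_ne_zero (sub_ne_zero.2 fun h => hx (h ▸ htau c j hj))
        (sub_ne_zero.2 (hl j hj))
  have hw0 : ∀ j, x ≠ lam j → w j = 0 := fun j hj => by
    have := hw j
    simp only [hu0, mul_zero, Finset.sum_const_zero, zero_add] at this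
    have h : (x - lam j) * w j = 0 := by linarith
    exact (mul_eq_zero.1 h).resolve_left (sub_ne_zero.2 hj)
  refine ⟨funext hu0, funext fun j => ?_⟩
  by_cases hxj : x = lam j
  · rcases hcov j with ⟨c, hc⟩ | h
    · have := hu c
      -- All other entries of the class vanish, so the row of `c` gives `√(b c j) * w j = 0`.
      rw [Finset.sum_eq_single j (fun i hi hij => ?_) (fun h => absurd hc h), hu0 c] at this
      · simpa [hs c j hc] using this
      · rw [hw0 i, mul_zero]
        rintro h
        rcases h2 c i hi j hc hij with h' | h'
        · linarith [h1 c i hi]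
        · linarith
    · exact absurd (hxj ▸ h) hx
  · exact hw0 j hxj

theorem exists_diag {n : ℕ} (A : Matrix (Fin n) (Fin n) ℝ) (hA : A.IsSymm) :
    ∃ (U : Matrix (Fin n) (Fin n) ℝ) (lam : Fin n → ℝ), U * Uᵀ = 1 ∧ Uᵀ * U = 1 ∧
      A = U * diagonal lam * Uᵀ := by
  have hH : A.IsHermitian := by
    rw [Matrix.IsHermitian, conjTranspose_eq_transpose_of_trivial]
    exact hA
  have hs : star (hH.eigenvectorUnitary : Matrix (Fin n) (Fin n) ℝ) =
      (hH.eigenvectorUnitary : Matrix (Fin n) (Fin n) ℝ)ᵀ := by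
    rw [star_eq_conjTranspose, conjTranspose_eq_transpose_of_trivial]
  refine ⟨hH.eigenvectorUnitary, hH.eigenvalues, ?_, ?_, ?_⟩
  · rw [← hs]; exact Unitary.coe_mul_star_self _
  · rw [← hs]; exact Unitary.coe_star_mul_self _
  · have := hH.spectral_theorem
    rw [Unitary.conjStarAlgAut_apply, ← Unitary.coe_star, Unitary.coe_star, hs] at this
    exact this

/-- The multiplicity of `t` is the number of diagonal entries equal to `t` in an orthogonal
diagonalization, by counting ranks. -/
theorem eigMult_eq {n : ℕ} (U : Matrix (Fin n) (Fin n) ℝ) (lam : Fin n → ℝ) (hU : U * Uᵀ = 1)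
    (t : ℝ) : eigMult (U * diagonal lam * Uᵀ) t = (Finset.univ.filter fun j => lam j = t).card := by
  have e : U * diagonal lam * Uᵀ - t • (1 : Matrix (Fin n) (Fin n) ℝ) =
      U * diagonal (fun j => lam j - t) * Uᵀ := by
    have : diagonal (fun j => lam j - t) = diagonal lam - t • (1 : Matrix (Fin n) (Fin n) ℝ) := by
      ext i j
      by_cases h : i = j <;> simp [h, diagonal, one_apply]
    rw [this, mul_sub, sub_mul]
    simp [hU]
  have hd : IsUnit U.det := isUnit_det_of_right_inverse hU
  have hd' : IsUnit Uᵀ.det := by rwa [det_transpose]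
  have hr : (U * diagonal (fun j => lam j - t) * Uᵀ).rank = Fintype.card {j // lam j - t ≠ 0} := by
    rw [rank_mul_eq_left_of_isUnit_det _ _ hd', rank_mul_eq_right_of_isUnit_det _ _ hd,
      rank_diagonal]
  have hk := (Matrix.toLin' (U * diagonal (fun j => lam j - t) * Uᵀ)).finrank_range_add_finrank_ker
  rw [eigMult, e]
  rw [Matrix.rank, ← toLin'_apply'] at hr
  rw [hr, Fintype.card_subtype, Module.finrank_fintype_fun_eq_card, Fintype.card_fin] at hk
  have h := Finset.card_filter_add_card_filter_not (s := (Finset.univ : Finset (Fin n)))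
    (fun j => lam j = t)
  simp only [sub_ne_zero, ne_eq, Finset.card_univ, Fintype.card_fin] at h hk
  omega

/-- A bordering of `diag lam` in the eigenbasis is carried back to a bordering of
`U * diagonal lam * Uᵀ`: the new border is `U * B`, and eigenvectors `(u, w)` correspond to
solutions `(u, Uᵀ w)` of the coordinate equations. -/
theorem exists_bordering {n r : ℕ} (U : Matrix (Fin n) (Fin n) ℝ) (lam : Fin n → ℝ)
    (hU : U * Uᵀ = 1) (hU' : Uᵀ * U = 1) (T : Set ℝ) (D : Fin r → ℝ) (B : Matrix (Fin n) (Fin r) ℝ)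
    (h : ∀ x ∉ T, ∀ (u : Fin r → ℝ) (w : Fin n → ℝ),
      (∀ c, D c * u c + ∑ j, B j c * w j = x * u c) →
      (∀ j, ∑ c, B j c * u c + lam j * w j = x * w j) → u = 0 ∧ w = 0) :
    ∃ M : Matrix (Fin (r + n)) (Fin (r + n)) ℝ, M.IsSymm ∧
      (∀ i j : Fin n, M (Fin.natAdd r i) (Fin.natAdd r j) = (U * diagonal lam * Uᵀ) i j) ∧
      spectrum ℝ M ⊆ T := by
  refine ⟨Matrix.reindexAlgEquiv ℝ ℝ finSumFinEquiv
    (fromBlocks (diagonal D) (U * B)ᵀ (U * B) (U * diagonal lam * Uᵀ)), ?_, ?_, ?_⟩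
  · rw [coe_reindexAlgEquiv, reindex_apply]
    refine IsSymm.submatrix (IsSymm.fromBlocks (by simp) (by simp) ?_) _
    simp [Matrix.IsSymm, Matrix.mul_assoc]
  · intro i j
    simp [← finSumFinEquiv_apply_right]
  · rw [AlgEquiv.spectrum_eq]
    intro x hx
    by_contra hxT
    rw [← Matrix.spectrum_toLin', ← Module.End.hasEigenvalue_iff_mem_spectrum] at hx
    obtain ⟨v, hv⟩ := hx.exists_hasEigenvector
    have hv1 := hv.apply_eq_smul
    obtain ⟨u, w, rfl⟩ : ∃ u w, v = Sum.elim u w :=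
      ⟨v ∘ Sum.inl, v ∘ Sum.inr, (Sum.elim_comp_inl_inr v).symm⟩
    rw [toLin'_apply, fromBlocks_mulVec] at hv1
    have e1 : diagonal D *ᵥ u + Bᵀ *ᵥ (Uᵀ *ᵥ w) = x • u := by
      rw [mulVec_mulVec, ← transpose_mul]
      ext c
      simpa using congrFun hv1 (Sum.inl c)
    have e2' : (U * B) *ᵥ u + (U * diagonal lam * Uᵀ) *ᵥ w = x • w := by
      ext c
      simpa using congrFun hv1 (Sum.inr c)
    have e2 : B *ᵥ u + diagonal lam *ᵥ (Uᵀ *ᵥ w) = x • (Uᵀ *ᵥ w) := by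
      have := congrArg (Uᵀ *ᵥ ·) e2'
      simpa only [mulVec_add, mulVec_mulVec, ← Matrix.mul_assoc, hU', Matrix.one_mul,
        mulVec_smul] using this
    obtain ⟨hu, hw⟩ := h x hxT u (Uᵀ *ᵥ w)
      (fun c => by
        have := congrFun e1 c
        rw [Pi.add_apply, mulVec_diagonal] at this
        exact this)
      (fun c => by
        have := congrFun e2 c
        rw [Pi.add_apply, mulVec_diagonal] at this
        exact this)
    have hw' : w = 0 := by
      rw [← one_mulVec w, ← hU, ← mulVec_mulVec, hw, mulVec_zero]
    exact hv.2 (by rw [hu, hw']; ext i; cases i <;> rfl)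

/-- The infimum defining `Cval` is attained, as the set of admissible `p` is nonempty. This rules
out the junk value `sInf ∅ = 0`. -/
theorem exists_cut {k r t : ℕ} (ht : 2 ≤ t) (htk : t ≤ k) (m : Fin k → ℕ) (hC : Cval k t m ≤ r) :
    ∃ p : Fin t → Fin k, Monotone p ∧ (p ⟨0, by omega⟩).val = 0 ∧
      (p ⟨t - 1, by omega⟩).val = k - 1 ∧
      ∀ (i : Fin t) (h : i.val + 1 < t), ∑ j ∈ Finset.Ioo (p i) (p ⟨i.val + 1, h⟩), m j ≤ r := by
  obtain ⟨p, hp, hp', hr⟩ := Nat.sInf_mem (s := { r : ℕ | ∃ p : Fin t → Fin k, Monotone p ∧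
    (∀ i : Fin t, (i.val = 0 → (p i).val = 0) ∧ (i.val = t - 1 → (p i).val = k - 1)) ∧
    r = Finset.univ.sup (fun i : Fin t =>
      if h : i.val + 1 < t then
        ∑ j ∈ Finset.Ioo (p i) (p ⟨i.val + 1, h⟩), m j
      else 0) })
    ⟨_, fun i => if i.val = t - 1 then ⟨k - 1, by omega⟩ else ⟨0, by omega⟩, by
      intro a b hab
      have hab' : a.val ≤ b.val := hab
      have := b.isLt
      rw [Fin.le_def]
      dsimp only
      split_ifs
      · exact le_rfl
      · omega
      · exact Nat.zero_le _
      · exact le_rfl, by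
      intro i
      constructor
      · intro h
        beta_reduce
        rw [if_neg (by omega)]
      · intro h
        beta_reduce
        rw [if_pos h], rfl⟩
  refine ⟨p, hp, (hp' _).1 rfl, (hp' _).2 rfl, fun i h => ?_⟩
  have hle := Finset.le_sup (f := fun i : Fin t => if h : i.val + 1 < t then
        ∑ j ∈ Finset.Ioo (p i) (p ⟨i.val + 1, h⟩), m j else 0) (Finset.mem_univ i)
  rw [← hr] at hle
  simp only [h, dif_pos] at hle
  exact hle.trans hC

/-- An index missed by `p` lies strictly between two consecutive values of `p`, since `p` starts
at the first index and ends at the last one. -/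
theorem exists_gap {k t : ℕ} (ht : 2 ≤ t) (p : Fin t → Fin k)
    (h0 : (p ⟨0, by omega⟩).val = 0) (h1 : (p ⟨t - 1, by omega⟩).val = k - 1) (q : Fin k)
    (hq : q ∉ Set.range p) :
    ∃ (i : Fin t) (h : i.val + 1 < t), p i < q ∧ q < p ⟨i.val + 1, h⟩ := by
  have hq' : ∀ i, p i ≠ q := fun i hi => hq ⟨i, hi⟩
  by_contra! hcon
  have key : ∀ (a : ℕ) (ha : a < t), p ⟨a, ha⟩ < q := by
    intro a
    induction a with
    | zero =>
      intro ha
      refine lt_of_le_of_ne ?_ (hq' _)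
      rw [Fin.le_def, h0]; exact Nat.zero_le _
    | succ a ih => intro ha; exact lt_of_le_of_ne (hcon ⟨a, by omega⟩ ha (ih _)) (hq' _)
  have := key (t - 1) (by omega)
  rw [Fin.lt_def, h1] at this
  omega

/-- At most `r` elements can be labelled injectively by numbers below `r`. Labels live in `ℕ`
because `Fin r` may be empty. -/
theorem exists_label {ι : Type*} (G : Finset ι) (r : ℕ) (h : G.card ≤ r) :
    ∃ e : ι → ℕ, (∀ j ∈ G, e j < r) ∧ Set.InjOn e G := by
  classical
  refine ⟨fun j => if hj : j ∈ G then (G.equivFin ⟨j, hj⟩).val else 0, fun j hj => ?_, ?_⟩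
  · simp only [hj, dif_pos]
    exact (Fin.isLt _).trans_le h
  · intro a ha b hb hab
    have ha' : a ∈ G := ha
    have hb' : b ∈ G := hb
    simp only [ha', hb', dif_pos] at hab
    simpa using G.equivFin.injective (Fin.ext hab)

/-- If a symmetric matrix `A` has `k ≥ 2` distinct eigenvalues `μ 0 < ⋯ < μ (k-1)` with
ordered multiplicity list `m`, `2 ≤ t ≤ k`, and `C(m, t) ≤ r`, then there exists a
symmetric `r`-bordering `M` of `A` with at most `t` distinct eigenvalues. -/
theorem stmt6 {n k r t : ℕ} (hk : 2 ≤ k) (ht : 2 ≤ t) (htk : t ≤ k)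
    (A : Matrix (Fin n) (Fin n) ℝ) (hA : A.IsSymm)
    (μ : Fin k → ℝ) (hμ : StrictMono μ) (hspec : spectrum ℝ A = Set.range μ)
    (hC : Cval k t (fun i => eigMult A (μ i)) ≤ r) :
    ∃ M : Matrix (Fin (r + n)) (Fin (r + n)) ℝ, M.IsSymm ∧
      (∀ i j : Fin n, M (Fin.natAdd r i) (Fin.natAdd r j) = A i j) ∧
      (spectrum ℝ M).ncard ≤ t := by
  classical
  obtain ⟨p, hp, hp0, hp1, hgap⟩ := exists_cut ht htk _ hC
  obtain ⟨U, lam, hU, hU', rfl⟩ := exists_diag A hA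
  have hlam : ∀ j, ∃ q, μ q = lam j := fun j => by
    have : lam j ∈ spectrum ℝ (U * diagonal lam * Uᵀ) := by
      have e : spectrum ℝ (U * diagonal lam * Uᵀ) = spectrum ℝ (diagonal lam) := by
        have := spectrum.units_conjugate (R := ℝ) (a := diagonal lam) (u := ⟨U, Uᵀ, hU, hU'⟩)
        simpa using this
      rw [e, spectrum_diagonal]
      exact ⟨j, rfl⟩
    rwa [hspec] at this
  choose f hf using hlam
  -- `G i` indexes the eigenvalues, with multiplicity, in the `i`-th gap.
  let G : Fin t → Finset (Fin n) := fun i => Finset.univ.filter fun j =>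
    ∃ h : i.val + 1 < t, p i < f j ∧ f j < p ⟨i.val + 1, h⟩
  have hG : ∀ i j, j ∈ G i ↔ ∃ h : i.val + 1 < t, p i < f j ∧ f j < p ⟨i.val + 1, h⟩ := by
    intro i j; simp [G]
  have hcard : ∀ i, (G i).card ≤ r := fun i => by
    by_cases h : i.val + 1 < t
    · refine le_trans ?_ (hgap i h)
      rw [Finset.card_eq_sum_card_fiberwise (f := f)
        (t := Finset.Ioo (p i) (p ⟨i.val + 1, h⟩))]
      · refine Finset.sum_le_sum fun q _ => ?_
        rw [eigMult_eq U lam hU]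
        refine Finset.card_le_card fun j hj => ?_
        simp only [Finset.mem_filter, Finset.mem_univ, true_and] at hj ⊢
        rw [← hf, hj.2]
      · intro j hj
        obtain ⟨_, h1, h2⟩ := (hG i j).1 hj
        simp [h1, h2]
    · rw [Finset.card_eq_zero.2]
      · exact Nat.zero_le _
      · exact Finset.eq_empty_of_forall_notMem fun j hj => h ((hG i j).1 hj).1
  choose e he he' using fun i => exists_label (G i) r (hcard i)
  have hlt : ∀ i i' j j', i < i' → j ∈ G i → j' ∈ G i' →
      ∃ h : i.val + 1 < t, f j < p ⟨i.val + 1, h⟩ ∧ p ⟨i.val + 1, h⟩ < f j' := by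
    intro i i' j j' hii hj hj'
    obtain ⟨h, -, h2⟩ := (hG i j).1 hj
    obtain ⟨-, h3, -⟩ := (hG i' j').1 hj'
    exact ⟨h, h2, lt_of_le_of_lt (hp (by rw [Fin.le_def]; exact hii)) h3⟩
  have huniq : ∀ i i' j, j ∈ G i → j ∈ G i' → i = i' := by
    intro i i' j hj hj'
    rcases lt_trichotomy i i' with h | h | h
    · obtain ⟨_, h1, h2⟩ := hlt i i' j j h hj hj'
      exact absurd (h1.trans h2) (lt_irrefl _)
    · exact h
    · obtain ⟨_, h1, h2⟩ := hlt i' i j j h hj' hj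
      exact absurd (h1.trans h2) (lt_irrefl _)
  -- `tau j` is the right end of the gap containing `lam j`, and arbitrary if there is none.
  have htau : ∀ j, ∃ s : ℝ, ∀ i, j ∈ G i → ∃ h : i.val + 1 < t, s = μ (p ⟨i.val + 1, h⟩) := by
    intro j
    by_cases hj : ∃ i, j ∈ G i
    · obtain ⟨i, hi⟩ := hj
      obtain ⟨h, -⟩ := (hG i j).1 hi
      exact ⟨μ (p ⟨i.val + 1, h⟩), fun i' hi' => by
        obtain rfl := huniq i i' j hi hi'
        exact ⟨h, rfl⟩⟩
    · exact ⟨0, fun i hi => absurd ⟨i, hi⟩ hj⟩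
  choose tau htau using htau
  -- Labels are injective on each gap, so a class meets every gap at most once.
  let S : Fin r → Finset (Fin n) := fun c => Finset.univ.filter fun j =>
    ∃ i, j ∈ G i ∧ e i j = c.val
  have hS : ∀ c j, j ∈ S c ↔ ∃ i, j ∈ G i ∧ e i j = c.val := by intro c j; simp [S]
  obtain ⟨D, B, hDB⟩ : ∃ (D : Fin r → ℝ) (B : Matrix (Fin n) (Fin r) ℝ),
      ∀ x ∉ Set.range (μ ∘ p), ∀ (u : Fin r → ℝ) (w : Fin n → ℝ),
      (∀ c, D c * u c + ∑ j, B j c * w j = x * u c) →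
      (∀ j, ∑ c, B j c * u c + lam j * w j = x * w j) → u = 0 ∧ w = 0 := by
    refine exists_arrow (μ (p ⟨0, by omega⟩)) lam tau S (Set.range (μ ∘ p)) ⟨_, rfl⟩
      ?_ ?_ ?_ ?_ ?_ ?_
    · intro j c c' h h'
      obtain ⟨i, hi, hc⟩ := (hS c j).1 h
      obtain ⟨i', hi', hc'⟩ := (hS c' j).1 h'
      obtain rfl := huniq i i' j hi hi'
      exact Fin.ext (hc.symm.trans hc')
    · intro j
      by_cases hj : f j ∈ Set.range p
      · obtain ⟨i, hi⟩ := hj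
        exact Or.inr ⟨i, by simp [hi, hf]⟩
      · obtain ⟨i, hi⟩ := exists_gap ht p hp0 hp1 (f j) hj
        have hi' := (hG i j).2 hi
        exact Or.inl ⟨⟨e i j, he i j hi'⟩, (hS _ j).2 ⟨i, hi', rfl⟩⟩
    · intro c j hj
      obtain ⟨i, hi, -⟩ := (hS c j).1 hj
      obtain ⟨h, hs⟩ := htau j i hi
      exact ⟨_, hs.symm⟩
    · intro c j hj
      obtain ⟨i, hi, -⟩ := (hS c j).1 hj
      obtain ⟨h, h1, -⟩ := (hG i j).1 hi
      rw [← hf]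
      exact hμ (lt_of_le_of_lt (hp (by rw [Fin.le_def]; exact Nat.zero_le _)) h1)
    · intro c j hj
      obtain ⟨i, hi, -⟩ := (hS c j).1 hj
      obtain ⟨h, -, h1⟩ := (hG i j).1 hi
      obtain ⟨_, hs⟩ := htau j i hi
      rw [← hf, hs]
      exact hμ h1
    · intro c j hj j' hj' hne
      obtain ⟨i, hi, hc⟩ := (hS c j).1 hj
      obtain ⟨i', hi', hc'⟩ := (hS c j').1 hj'
      rcases lt_trichotomy i i' with h | h | h
      · obtain ⟨_, h1, h2⟩ := hlt i i' j j' h hi hi'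
        obtain ⟨_, hs⟩ := htau j i hi
        left
        rw [hs, ← hf]
        exact hμ h2
      · subst h
        exact absurd (he' i hi hi' (hc.trans hc'.symm)) hne
      · obtain ⟨_, h1, h2⟩ := hlt i' i j' j h hi' hi
        right
        rw [← hf, ← hf j]
        exact hμ (h1.trans h2)
  obtain ⟨M, h1, h2, h3⟩ := exists_bordering U lam hU hU' _ D B hDB
  refine ⟨M, h1, h2, (Set.ncard_le_ncard h3 (Set.finite_range _)).trans ?_⟩
  rw [← Set.image_univ]
  refine (Set.ncard_image_le Set.finite_univ).trans ?_
  simp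
end
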